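/- arXiv:2509.24034 — 2 statements merged into one kernel-verified Lean document; each statement's English description precedes it below -/
import Mathlib

section
/- Let G be a finite abelian group with |G| > 1. Then lim_{g → ∞} limsup_{n → ∞} ν_g(G^n) / (√g · |G|^{n/2}) = 1 and lim_{g → ∞} liminf_{n → ∞} ν_g(G^n) / (√g · |G|^{n/2}) = 1, where G^n denotes the direct product of n copies of G. -/
/-!
Counting pairs gives `|A| ^ 2 ≥ g * |G| ^ n` for every `g`-additive basis `A` of `G ^ n`, so all the
ratios are at least `1` (`sqrt_le_nuMin`). The content is a construction showing that, for fixed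
`g ≥ 1` and all large `n`, the ratio is at most `1 + 2 * √|G| / √g` (`nuMin_le`).

The construction takes a union of `k` pairwise complementary subgroups of `H × H`, each of size
`|H|`. If `x` lies in one of them, that subgroup alone gives `|H|` representations; otherwise every
ordered pair of distinct subgroups gives one representation, and these are all different. So the
union is a `k (k - 1)`-additive basis of size at most `k * |H|` as soon as `|H| ≥ k (k - 1)`
(`isAddBasis_iUnion`).

Such subgroups are the graphs of endomorphisms of `H = G ^ m` with pairwise invertible differences.
They come from the ring `ℤ[X] / (P)` with `P = X ^ (s + 1) * ∏_{1 ≤ d ≤ k} (X ^ d - 1) + 1`: modulo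
`P` the elements `X` and `X ^ d - 1` are units, hence so are the differences of the powers
`1, X, …, X ^ (k - 1)`. The ring is free of rank `m = deg P` over `ℤ`, it acts on
`Hom(ℤ[X] / (P), G) ≃ G ^ m`, and `m` can be any large integer because `s` is free
(`exists_endomorphisms`).

This treats `G ^ (2 m)`. For `n = 2 m + r` with `r ≤ 1`, the preimage of the basis under a projection
`G ^ n → G ^ (2 m)` multiplies both `g` and the size by `|G| ^ r`, which leaves the ratio unchanged.
-/

open Filter Topology

/-- `A` is a `g`-additive basis for the additive group `G`: every `x ∈ G` has at least `g`
representations `x = a₁ + a₂` with ordered pairs `(a₁, a₂) ∈ A × A`. -/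
def IsAddBasis {G : Type*} [AddCommGroup G] (g : ℕ) (A : Set G) : Prop :=
  ∀ x : G, g ≤ Nat.card {p : G × G // p.1 ∈ A ∧ p.2 ∈ A ∧ p.1 + p.2 = x}

/-- `ν_g(G)`: the minimum size of a `g`-additive basis for `G`. -/
noncomputable def nuMin (G : Type*) [AddCommGroup G] (g : ℕ) : ℕ :=
  sInf {k : ℕ | ∃ A : Set G, A.Finite ∧ IsAddBasis g A ∧ Nat.card A = k}

/-! ### Lower bound by counting -/

lemma card_sq_ge {K : Type*} [AddCommGroup K] [Finite K] {g : ℕ} {A : Set K}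
    (hA : IsAddBasis g A) : g * Nat.card K ≤ Nat.card A ^ 2 := by
  classical
  have := Fintype.ofFinite K
  let e : (Σ x : K, {p : K × K // p.1 ∈ A ∧ p.2 ∈ A ∧ p.1 + p.2 = x}) → A × A :=
    fun q => (⟨q.2.1.1, q.2.2.1⟩, ⟨q.2.1.2, q.2.2.2.1⟩)
  have he : Function.Injective e := by
    rintro ⟨x, ⟨⟨a, b⟩, ha, hb, rfl⟩⟩ ⟨y, ⟨⟨c, d⟩, hc, hd, rfl⟩⟩ h
    simp only [e, Prod.mk.injEq, Subtype.mk.injEq] at h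
    obtain ⟨rfl, rfl⟩ := h
    rfl
  have h1 := Nat.card_le_card_of_injective e he
  rw [Nat.card_sigma, Nat.card_prod, ← sq] at h1
  refine le_trans ?_ h1
  calc g * Nat.card K = ∑ _x : K, g := by simp [mul_comm]
    _ ≤ _ := Finset.sum_le_sum fun x _ => hA x

lemma nuMin_le_card {K : Type*} [AddCommGroup K] [Finite K] {g : ℕ} {A : Set K}
    (hA : IsAddBasis g A) : nuMin K g ≤ Nat.card A :=
  Nat.sInf_le ⟨A, A.toFinite, hA, rfl⟩

/-- The existence of some basis is needed: otherwise `nuMin` is the infimum of the empty set. -/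
lemma sqrt_le_nuMin {K : Type*} [AddCommGroup K] [Finite K] {g : ℕ} {A : Set K}
    (hA : IsAddBasis g A) : Real.sqrt g * Real.sqrt (Nat.card K) ≤ nuMin K g := by
  obtain ⟨B, -, hB, hcard⟩ := Nat.sInf_mem
    (s := {k : ℕ | ∃ A : Set K, A.Finite ∧ IsAddBasis g A ∧ Nat.card A = k})
    ⟨_, A, A.toFinite, hA, rfl⟩
  have h := card_sq_ge hB
  rw [hcard] at h
  rw [← Real.sqrt_mul (Nat.cast_nonneg g)]
  refine Real.sqrt_le_iff.2 ⟨Nat.cast_nonneg _, ?_⟩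
  exact_mod_cast h

lemma IsAddBasis.mono {K : Type*} [AddCommGroup K] {g g' : ℕ} (h : g ≤ g') {A : Set K}
    (hA : IsAddBasis g' A) : IsAddBasis g A := fun x => h.trans (hA x)

/-! ### Unions of complementary subgroups, and preimages -/

lemma isAddBasis_iUnion {K : Type*} [AddCommGroup K] [Finite K] {k N : ℕ}
    (V : Fin k → AddSubgroup K) (hN : ∀ i, Nat.card (V i) = N) (hkN : k * (k - 1) ≤ N)
    (hinf : ∀ i j, i ≠ j → ∀ a ∈ V i, a ∈ V j → a = 0)
    (hsup : ∀ i j, i ≠ j → ∀ x, ∃ a ∈ V i, ∃ b ∈ V j, a + b = x) :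
    IsAddBasis (k * (k - 1)) (⋃ i, (V i : Set K)) ∧
      Nat.card (⋃ i, (V i : Set K)) ≤ k * N := by
  classical
  refine ⟨fun x => ?_, ?_⟩
  · by_cases hx : ∃ i, x ∈ V i
    · obtain ⟨i, hi⟩ := hx
      refine hkN.trans ?_
      rw [← hN i]
      refine Nat.card_le_card_of_injective
        (fun h : V i => ⟨(h.1, x - h.1), Set.mem_iUnion.2 ⟨i, h.2⟩,
          Set.mem_iUnion.2 ⟨i, (V i).sub_mem hi h.2⟩, by simp⟩) ?_
      intro a b hab
      simp only [Subtype.mk.injEq, Prod.mk.injEq] at hab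
      exact Subtype.ext hab.1
    · push Not at hx
      choose! a ha b hb hab using fun (q : Fin k × Fin k) (hq : q.1 ≠ q.2) => hsup q.1 q.2 hq x
      have hcard : Nat.card {q : Fin k × Fin k // q.1 ≠ q.2} = k * (k - 1) := by
        rw [Nat.card_eq_fintype_card, Fintype.card_subtype]
        have := Finset.offDiag_card (Finset.univ : Finset (Fin k))
        rw [Finset.card_univ, Fintype.card_fin] at this
        rw [Nat.mul_sub, mul_one, ← this]
        congr 1
        ext q
        simp
      rw [← hcard]
      refine Nat.card_le_card_of_injective
        (fun q => ⟨(a q.1, b q.1), Set.mem_iUnion.2 ⟨_, ha q.1 q.2⟩,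
          Set.mem_iUnion.2 ⟨_, hb q.1 q.2⟩, hab q.1 q.2⟩) ?_
      rintro ⟨q, hq⟩ ⟨q', hq'⟩ h
      simp only [Subtype.mk.injEq, Prod.mk.injEq] at h
      obtain ⟨h1, h2⟩ := h
      have e1 : q.1 = q'.1 := by
        by_contra hne
        -- a zero summand would put `x` into one of the subgroups
        have h0 := hinf _ _ hne _ (ha q hq) (h1 ▸ ha q' hq')
        apply hx q.2
        have := hab q hq
        rw [h0, zero_add] at this
        exact this ▸ hb q hq
      have e2 : q.2 = q'.2 := by
        by_contra hne
        have h0 := hinf _ _ hne _ (hb q hq) (h2 ▸ hb q' hq')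
        apply hx q.1
        have := hab q hq
        rw [h0, add_zero] at this
        exact this ▸ ha q hq
      exact Subtype.ext (Prod.ext e1 e2)
  · calc Nat.card (⋃ i, (V i : Set K)) ≤ ∑ i, Nat.card (V i) := by
          have := Nat.card_le_card_of_surjective
            (fun q : (Σ i, V i) => (⟨q.2.1, Set.mem_iUnion.2 ⟨q.1, q.2.2⟩⟩ :
              (⋃ i, (V i : Set K) : Set K))) (by
              rintro ⟨y, hy⟩
              obtain ⟨i, hi⟩ := Set.mem_iUnion.1 hy
              exact ⟨⟨i, ⟨y, hi⟩⟩, rfl⟩)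
          rwa [Nat.card_sigma] at this
      _ = k * N := by simp [hN]

lemma isAddBasis_preimage {L K : Type*} [AddCommGroup L] [AddCommGroup K] [Finite L] [Finite K]
    (f : L →+ K) (hf : Function.Surjective f) {g : ℕ} {A : Set K} (hA : IsAddBasis g A) :
    IsAddBasis (g * Nat.card f.ker) (f ⁻¹' A) ∧
      Nat.card (f ⁻¹' A) ≤ Nat.card A * Nat.card f.ker := by
  choose s hs using hf
  refine ⟨fun x => ?_, ?_⟩
  · refine (Nat.mul_le_mul_right _ (hA (f x))).trans ?_
    rw [← Nat.card_prod]
    refine Nat.card_le_card_of_injective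
      (fun q => ⟨(s q.1.1.1 + q.2.1, x - (s q.1.1.1 + q.2.1)), ?_, ?_, by simp⟩) ?_
    · have h0 : f q.2.1 = 0 := q.2.2
      simpa [hs, h0] using q.1.2.1
    · have h0 : f q.2.1 = 0 := q.2.2
      have : f x - q.1.1.1 = q.1.1.2 := sub_eq_of_eq_add' q.1.2.2.2.symm
      simpa [hs, h0, this] using q.1.2.2.1
    · rintro ⟨⟨⟨a, b⟩, _, _, hab⟩, ⟨l, hl⟩⟩ ⟨⟨⟨c, d⟩, _, _, hcd⟩, ⟨l', hl'⟩⟩ h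
      simp only [Subtype.mk.injEq, Prod.mk.injEq] at h hab hcd
      have hl0 : f l = 0 := hl
      have hl0' : f l' = 0 := hl'
      have hac : a = c := by
        have := congrArg f h.1
        simpa [hs, hl0, hl0'] using this
      subst hac
      have hbd : b = d := add_left_cancel (hab.trans hcd.symm)
      subst hbd
      have : l = l' := add_left_cancel h.1
      subst this
      rfl
  · rw [← Nat.card_prod]
    refine Nat.card_le_card_of_injective
      (fun y => (⟨f y.1, y.2⟩, ⟨y.1 - s (f y.1), by simp [AddMonoidHom.mem_ker, hs]⟩)) ?_
    rintro ⟨y, hy⟩ ⟨z, hz⟩ h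
    simp only [Subtype.mk.injEq, Prod.mk.injEq] at h
    obtain ⟨h1, h2⟩ := h
    rw [h1] at h2
    exact Subtype.ext (sub_left_injective h2)

/-! ### Endomorphisms with invertible differences -/

open Polynomial in
/-- For every large `m` there is a ring `ℤ[X] / (P)`, free of rank `m` over `ℤ`, in which the first
`k` powers of the root of `P` have pairwise differences that are units. -/
lemma exists_polynomial (k : ℕ) : ∃ m₀ : ℕ, ∀ m ≥ m₀, ∃ P : ℤ[X], P.Monic ∧ P.natDegree = m ∧
    ∀ i j : Fin k, i ≠ j →
      IsUnit (AdjoinRoot.root P ^ (i : ℕ) - AdjoinRoot.root P ^ (j : ℕ)) := by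
  set D : ℤ[X] := ∏ d ∈ Finset.range k, (X ^ (d + 1) - 1) with hD
  have hDm : D.Monic := monic_prod_of_monic _ _ fun d _ => by
    simpa using monic_X_pow_sub_C (1 : ℤ) (Nat.succ_ne_zero d)
  refine ⟨D.natDegree + 1, fun m hm => ?_⟩
  obtain ⟨s, rfl⟩ := Nat.exists_eq_add_of_le hm
  have hEm : (X ^ (s + 1) * D).Monic := (monic_X_pow _).mul hDm
  have hEd : (X ^ (s + 1) * D).natDegree = D.natDegree + 1 + s := by
    rw [(monic_X_pow _).natDegree_mul hDm, natDegree_X_pow]; ring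
  have hlt : (1 : ℤ[X]).degree < (X ^ (s + 1) * D).degree := by
    rw [degree_one, hEm.ne_zero |> degree_eq_natDegree, hEd]
    exact_mod_cast (by omega : 0 < D.natDegree + 1 + s)
  set P : ℤ[X] := X ^ (s + 1) * D + 1 with hP
  refine ⟨P, hEm.add_of_left hlt, ?_, ?_⟩
  · rw [← hEd]; exact natDegree_eq_of_degree_eq (degree_add_eq_left_of_degree_lt hlt)
  set x := AdjoinRoot.root P with hx
  have hrel : x ^ (s + 1) * ∏ d ∈ Finset.range k, (x ^ (d + 1) - 1) = -1 := by
    have h0 : AdjoinRoot.mk P P = 0 := AdjoinRoot.mk_self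
    conv_lhs at h0 => arg 2; rw [hP, hD]
    simp only [map_add, map_mul, map_pow, map_prod, map_sub, map_one, AdjoinRoot.mk_X] at h0
    exact eq_neg_of_add_eq_zero_left h0
  have hu : IsUnit (x ^ (s + 1) * ∏ d ∈ Finset.range k, (x ^ (d + 1) - 1)) := by
    rw [hrel]; exact isUnit_one.neg
  have hxu : IsUnit x := (isUnit_pow_iff (Nat.succ_ne_zero s)).1 (isUnit_of_mul_isUnit_left hu)
  have hdu : ∀ d < k, IsUnit (x ^ (d + 1) - 1) := fun d hd =>
    isUnit_of_dvd_unit (Finset.dvd_prod_of_mem (fun d => x ^ (d + 1) - 1) (Finset.mem_range.2 hd))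
      (isUnit_of_mul_isUnit_right hu)
  have key : ∀ i j : ℕ, i < j → j < k → IsUnit (x ^ j - x ^ i) := by
    intro i j hij hj
    obtain ⟨d, rfl⟩ := Nat.exists_eq_add_of_lt hij
    have : x ^ (i + d + 1) - x ^ i = x ^ i * (x ^ (d + 1) - 1) := by ring
    rw [this]
    exact (hxu.pow _).mul (hdu d (by omega))
  intro i j hij
  rcases lt_or_gt_of_ne hij with h | h
  · rw [← neg_sub]; exact (key _ _ h j.2).neg
  · exact key _ _ h i.2

lemma exists_endomorphisms (G : Type*) [AddCommGroup G] (k : ℕ) : ∃ m₀ : ℕ, ∀ m ≥ m₀,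
    ∃ ψ : Fin k → (Fin m → G) →+ (Fin m → G),
      ∀ i j, i ≠ j → Function.Bijective (ψ i - ψ j) := by
  obtain ⟨m₀, h⟩ := exists_polynomial k
  refine ⟨m₀, fun m hm => ?_⟩
  obtain ⟨P, hP, rfl, hu⟩ := h m hm
  -- `e` identifies `G ^ m` with `Hom(ℤ[X] / (P), G)`, on which `r` acts by precomposition
  let b := (AdjoinRoot.powerBasis' hP).basis
  let e : (Fin P.natDegree → G) ≃ₗ[ℤ] (AdjoinRoot P →ₗ[ℤ] G) := b.constr ℤ
  let M : AdjoinRoot P → (Fin P.natDegree → G) →ₗ[ℤ] (Fin P.natDegree → G) := fun r =>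
    e.symm.toLinearMap ∘ₗ (LinearMap.lcomp ℤ G (LinearMap.mulLeft ℤ r)) ∘ₗ e.toLinearMap
  have hM : ∀ r v, M r v = e.symm ((e v) ∘ₗ LinearMap.mulLeft ℤ r) := fun _ _ => rfl
  have hcomp : ∀ r s v, M r (M s v) = M (s * r) v := by
    intro r s v
    rw [hM, hM, hM, LinearEquiv.apply_symm_apply]
    congr 1
    ext t
    simp
  have hone : ∀ v, M 1 v = v := by
    intro v
    rw [hM, LinearEquiv.symm_apply_eq]
    ext t
    simp
  have hsub : ∀ r s v, M (r - s) v = M r v - M s v := by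
    intro r s v
    rw [hM, hM, hM, ← map_sub]
    congr 1
    ext t
    simp [sub_mul]
  refine ⟨fun i => (M (AdjoinRoot.root P ^ (i : ℕ))).toAddMonoidHom, fun i j hij => ?_⟩
  obtain ⟨u, hu⟩ := hu i j hij
  have hfun : ∀ v, ((M (AdjoinRoot.root P ^ (i : ℕ))).toAddMonoidHom -
      (M (AdjoinRoot.root P ^ (j : ℕ))).toAddMonoidHom) v = M u v := by
    intro v
    rw [hu, hsub]
    rfl
  refine Function.bijective_iff_has_inverse.2 ⟨M (↑u⁻¹ : AdjoinRoot P), fun v => ?_, fun v => ?_⟩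
  · rw [hfun, hcomp, Units.mul_inv, hone]
  · rw [hfun, hcomp, Units.inv_mul, hone]

/-! ### The construction in `G ^ n` -/

lemma exists_basis_prod {H : Type*} [AddCommGroup H] [Finite H] {k : ℕ}
    (ψ : Fin k → H →+ H) (hψ : ∀ i j, i ≠ j → Function.Bijective (ψ i - ψ j))
    (hk : k * (k - 1) ≤ Nat.card H) :
    ∃ A : Set (H × H), IsAddBasis (k * (k - 1)) A ∧ Nat.card A ≤ k * Nat.card H := by
  refine ⟨_, isAddBasis_iUnion (fun i => ((AddMonoidHom.id H).prod (ψ i)).range) ?_ hk ?_ ?_⟩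
  · intro i
    refine (Nat.card_congr (Equiv.ofInjective ((AddMonoidHom.id H).prod (ψ i)) ?_)).symm
    intro a b hab
    exact congrArg Prod.fst hab
  · rintro i j hij _ ⟨a, rfl⟩ ⟨b, hb⟩
    have h1 : b = a := congrArg Prod.fst hb
    have h2 : ψ j b = ψ i a := congrArg Prod.snd hb
    subst h1
    have : b = 0 := (hψ i j hij).1 (by simp [h2])
    simp [this]
  · rintro i j hij ⟨a, b⟩
    obtain ⟨x, hx⟩ := (hψ i j hij).2 (b - ψ j a)
    refine ⟨_, ⟨x, rfl⟩, _, ⟨a - x, rfl⟩, ?_⟩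
    have hx' : ψ i x - ψ j x = b - ψ j a := hx
    ext
    · simp
    · change ψ i x + ψ j (a - x) = b
      have : ψ i x + (ψ j a - ψ j x) = (ψ i x - ψ j x) + ψ j a := by abel
      rw [map_sub, this, hx', sub_add_cancel]

lemma exists_surjective (G : Type*) [AddCommGroup G] [Fintype G] (m r : ℕ) :
    ∃ f : (Fin (2 * m + r) → G) →+ (Fin m → G) × (Fin m → G), Function.Surjective f ∧
      Nat.card f.ker = Fintype.card G ^ r := by
  let f : (Fin (2 * m + r) → G) →+ (Fin m → G) × (Fin m → G) :=
    { toFun := fun v => (fun i => v ⟨i, by omega⟩, fun i => v ⟨m + i, by omega⟩)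
      map_zero' := rfl
      map_add' := fun _ _ => rfl }
  have hf : Function.Surjective f := by
    rintro ⟨a, b⟩
    refine ⟨fun i => if h : (i : ℕ) < m then a ⟨i, h⟩ else
      if h' : (i : ℕ) - m < m then b ⟨i - m, h'⟩ else 0, ?_⟩
    refine Prod.ext ?_ ?_
    · funext i
      simp [f]
    · funext i
      simp [f]
  refine ⟨f, hf, ?_⟩
  have h1 := AddSubgroup.card_eq_card_quotient_mul_card_addSubgroup f.ker
  rw [Nat.card_congr (QuotientAddGroup.quotientKerEquivOfSurjective f hf).toEquiv] at h1
  simp only [Nat.card_prod, Nat.card_fun, Nat.card_fin, Nat.card_eq_fintype_card (α := G)] at h1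
  have hpos : 0 < Fintype.card G := Fintype.card_pos
  have h2 : Fintype.card G ^ m * Fintype.card G ^ m * Fintype.card G ^ r =
      Fintype.card G ^ m * Fintype.card G ^ m * Nat.card f.ker := by
    rw [← h1]; ring
  exact (Nat.eq_of_mul_eq_mul_left (by positivity) h2).symm

lemma exists_basis (G : Type*) [AddCommGroup G] [Fintype G] (hG : 1 < Fintype.card G) (k : ℕ) :
    ∃ m₀ : ℕ, ∀ m ≥ m₀, ∀ r, ∃ A : Set (Fin (2 * m + r) → G),
      IsAddBasis (k * (k - 1) * Fintype.card G ^ r) A ∧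
        Nat.card A ≤ k * Fintype.card G ^ m * Fintype.card G ^ r := by
  obtain ⟨m₀, h⟩ := exists_endomorphisms G k
  refine ⟨max m₀ (k * (k - 1)), fun m hm r => ?_⟩
  obtain ⟨ψ, hψ⟩ := h m (le_of_max_le_left hm)
  have hcard : Nat.card (Fin m → G) = Fintype.card G ^ m := by simp
  obtain ⟨A, hA, hAc⟩ := exists_basis_prod ψ hψ (by
    rw [hcard]
    exact (le_of_max_le_right hm).trans (Nat.lt_pow_self hG).le)
  obtain ⟨f, hf, hfk⟩ := exists_surjective G m r
  obtain ⟨h1, h2⟩ := isAddBasis_preimage f hf hA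
  rw [hfk] at h1 h2
  rw [hcard] at hAc
  exact ⟨_, h1, h2.trans (Nat.mul_le_mul_right _ hAc)⟩

/-! ### Bounds for the ratio -/

lemma nuMin_le (G : Type*) [AddCommGroup G] [Fintype G] (hG : 1 < Fintype.card G) (g : ℕ)
    (hg : 0 < g) : ∀ᶠ n : ℕ in atTop,
      1 ≤ (nuMin (Fin n → G) g : ℝ) / (Real.sqrt g * (Fintype.card G : ℝ) ^ ((n : ℝ) / 2)) ∧
      (nuMin (Fin n → G) g : ℝ) / (Real.sqrt g * (Fintype.card G : ℝ) ^ ((n : ℝ) / 2)) ≤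
        1 + 2 * Real.sqrt (Fintype.card G) / Real.sqrt g := by
  set c := Fintype.card G with hc
  have hc1 : (1 : ℝ) ≤ Real.sqrt c := Real.one_le_sqrt.2 (by exact_mod_cast hG.le)
  have hc0 : (0 : ℝ) < Real.sqrt c := by linarith
  have hg0 : 0 < Real.sqrt g := Real.sqrt_pos.2 (by exact_mod_cast hg)
  -- `k` is just large enough that `(k - 1) ^ 2 * c ^ r ≥ g`
  let k : ℕ → ℕ := fun r => ⌈Real.sqrt g / Real.sqrt c ^ r⌉₊ + 1
  choose m₀ hm₀ using fun r => exists_basis G hG (k r)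
  filter_upwards [eventually_ge_atTop (2 * (m₀ 0 + m₀ 1) + 1)] with n hn
  obtain ⟨m, r, hr, rfl⟩ : ∃ m r, r < 2 ∧ n = 2 * m + r :=
    ⟨n / 2, n % 2, Nat.mod_lt _ two_pos, (Nat.div_add_mod n 2).symm⟩
  have hm : m₀ r ≤ m := by
    interval_cases r <;> omega
  obtain ⟨A, hA, hAc⟩ := hm₀ r m hm r
  have hpow : (c : ℝ) ^ (((2 * m + r : ℕ) : ℝ) / 2) = Real.sqrt c ^ (2 * m + r) := by
    rw [Real.sqrt_eq_rpow, ← Real.rpow_natCast, ← Real.rpow_mul (Nat.cast_nonneg c)]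
    congr 1; ring
  have hsq : Real.sqrt c ^ 2 = c := Real.sq_sqrt (Nat.cast_nonneg c)
  set t := Real.sqrt g / Real.sqrt c ^ r with ht
  have ht0 : 0 ≤ t := by positivity
  have htg : t * Real.sqrt c ^ r = Real.sqrt g := by
    rw [ht]; field_simp
  have hk1 : t ≤ (⌈t⌉₊ : ℝ) := Nat.le_ceil t
  have hk2 : (⌈t⌉₊ : ℝ) < t + 1 := Nat.ceil_lt_add_one ht0
  have hkr : k r = ⌈t⌉₊ + 1 := rfl
  rw [hkr] at hA hAc
  have hgle : g ≤ (⌈t⌉₊ + 1) * (⌈t⌉₊ + 1 - 1) * c ^ r := by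
    have h1 : (g : ℝ) ≤ (⌈t⌉₊ + 1) * ⌈t⌉₊ * c ^ r := by
      calc (g : ℝ) = t * t * c ^ r := by
            rw [← hsq, ← Real.sq_sqrt (Nat.cast_nonneg g : (0 : ℝ) ≤ g), ← htg]; ring
        _ ≤ _ := by gcongr; linarith
    rw [Nat.add_sub_cancel]
    exact_mod_cast h1
  have hA' := hA.mono hgle
  have hlow := sqrt_le_nuMin hA'
  have hcardn : Real.sqrt (Nat.card (Fin (2 * m + r) → G)) = Real.sqrt c ^ (2 * m + r) := by
    rw [Nat.card_fun, Nat.card_fin, Nat.card_eq_fintype_card, ← hc, Nat.cast_pow]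
    refine (Real.sqrt_eq_iff_mul_self_eq (by positivity) (by positivity)).2 ?_
    rw [← mul_pow, ← sq, hsq]
  rw [hcardn] at hlow
  rw [hpow]
  have hden : 0 < Real.sqrt g * Real.sqrt c ^ (2 * m + r) := by positivity
  refine ⟨(one_le_div hden).2 hlow, (div_le_iff₀ hden).2 ?_⟩
  have hup : (nuMin (Fin (2 * m + r) → G) g : ℝ) ≤ (⌈t⌉₊ + 1) * c ^ m * c ^ r := by
    exact_mod_cast (nuMin_le_card hA').trans hAc
  have hcr : Real.sqrt c ^ r ≤ Real.sqrt c := by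
    interval_cases r <;> simp [hc1]
  calc (nuMin (Fin (2 * m + r) → G) g : ℝ) ≤ (⌈t⌉₊ + 1) * c ^ m * c ^ r := hup
    _ ≤ (t + 2) * c ^ m * c ^ r := by gcongr ?_ * _ * _; linarith
    _ = (t * Real.sqrt c ^ r + 2 * Real.sqrt c ^ r) * Real.sqrt c ^ (2 * m + r) := by
        rw [← hsq]; simp only [Real.sqrt_sq hc0.le]; ring
    _ ≤ (Real.sqrt g + 2 * Real.sqrt c) * Real.sqrt c ^ (2 * m + r) := by
        rw [htg]; gcongr
    _ = _ := by field_simp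

/-- For a finite abelian group `G` with `|G| > 1`,
`lim_{g → ∞} limsup_{n → ∞} ν_g(G^n) / (√g · |G|^{n/2}) = 1` and
`lim_{g → ∞} liminf_{n → ∞} ν_g(G^n) / (√g · |G|^{n/2}) = 1`. -/
theorem stmt5 (G : Type*) [AddCommGroup G] [Fintype G] (hG : 1 < Fintype.card G) :
    Filter.Tendsto (fun g : ℕ =>
        Filter.limsup (fun n : ℕ => (nuMin (Fin n → G) g : ℝ) /
          (Real.sqrt g * (Fintype.card G : ℝ) ^ ((n : ℝ) / 2))) Filter.atTop)
      Filter.atTop (nhds 1) ∧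
    Filter.Tendsto (fun g : ℕ =>
        Filter.liminf (fun n : ℕ => (nuMin (Fin n → G) g : ℝ) /
          (Real.sqrt g * (Fintype.card G : ℝ) ^ ((n : ℝ) / 2))) Filter.atTop)
      Filter.atTop (nhds 1) := by
  have hlim : Tendsto (fun g : ℕ => 1 + 2 * Real.sqrt (Fintype.card G) / Real.sqrt g)
      atTop (𝓝 1) := by
    have h : Tendsto (fun g : ℕ => Real.sqrt (g : ℝ)) atTop atTop :=
      Real.tendsto_sqrt_atTop.comp tendsto_natCast_atTop_atTop
    simpa using (h.const_div_atTop (2 * Real.sqrt (Fintype.card G))).const_add 1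
  constructor
  · refine tendsto_of_tendsto_of_tendsto_of_le_of_le' tendsto_const_nhds hlim ?_ ?_
    all_goals
      filter_upwards [eventually_gt_atTop 0] with g hg
      have h := nuMin_le G hG g hg
      have h1 := h.mono fun n hn => hn.1
      have h2 := h.mono fun n hn => hn.2
    · exact le_limsup_of_frequently_le h1.frequently (isBoundedUnder_of_eventually_le h2)
    · exact limsup_le_of_le (isBoundedUnder_of_eventually_ge h1).isCoboundedUnder_le h2
  · refine tendsto_of_tendsto_of_tendsto_of_le_of_le' tendsto_const_nhds hlim ?_ ?_
    all_goals
      filter_upwards [eventually_gt_atTop 0] with g hg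
      have h := nuMin_le G hG g hg
      have h1 := h.mono fun n hn => hn.1
      have h2 := h.mono fun n hn => hn.2
    · exact le_liminf_of_le (isBoundedUnder_of_eventually_le h2).isCoboundedUnder_ge h1
    · exact liminf_le_of_frequently_le h2.frequently (isBoundedUnder_of_eventually_ge h1)
end

section
/- Let G = G₂ × H, where G₂ is a weakly admissible finite abelian 2-group and H is a finite abelian group of odd order. Then lim_{n → ∞} η₁(G^{2n}) / |G|^n = 1. Moreover, for each integer g ≥ 1, both limits lim_{n → ∞} η_g(G^{2n}) / (√g · |G|^n) and lim_{n → ∞} η_g(G^{2n+1}) / (√g · |G|^{n+1/2}) exist. -/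
/-!
Call a finite abelian group `E` good if the powers `E ^ n` have difference bases of size
`(1 + o(1)) |E| ^ (n / 2)`. Counting pairs gives `η_1(G ^ {2n}) ≥ |G| ^ n`, so the first limit is
the statement that `G × G` is good.

Goodness passes to extensions (`good_ext`): if `K ≤ E`, a difference basis of `K` plus the lifts of
a difference basis of `E / K` is a difference basis of `E`. It therefore suffices to decompose
`G × G` into three kinds of good groups:

* `(ℤ / p) ^ 2` for odd `p`: the parabola `{(x, x ^ 2)}` in `F × F`, `|F| = p ^ n`;
* `ℤ / 4`: the squares in a ring `R` on `(ℤ / 4) ^ n` with `R / 2R` the field of order `2 ^ n`;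
  modulo `4` a square depends only on its root modulo `2`, so there are at most `2 ^ n` of them;
* `ℤ / 8 × ℤ / 2`: the set `{(x ^ 2 + 4 x y, y)}` in `R × F`, with `R` such a ring on `(ℤ / 8) ^ n`
  and `F = R / 2R`.

In each case the differences fill the complement of a subgroup whose index tends to infinity, and
that subgroup has a difference basis of negligible size: a subgroup of it of about square-root
order, together with a transversal (`good_of_covers_compl`).

For odd `H`, the group `H × H` is built from the groups `(ℤ / p) ^ 2`. On the 2-part,
`(ℤ / 2 ^ e) ^ 2` with `e ≠ 1` is obtained from `ℤ / 4` and from `(ℤ / 8) ^ 2`, an extension of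
`ℤ / 8 × ℤ / 2` by `ℤ / 4`; and `(ℤ / 2 ^ e × ℤ / 2) ^ 2` with `e = 3` or `e ≥ 5` is an extension
of `(ℤ / 8 × ℤ / 2) ^ 2` by `(ℤ / 2 ^ (e - 3)) ^ 2`. Weak admissibility says exactly that every
factor `ℤ / 2` can be paired with its own factor `ℤ / 2 ^ e` of this kind.

Finally `η_g(A × C) ≤ η_g(A) η_1(C)`, so the normalised sequence `a n` of values of `η_g` satisfies
`a (m + k) ≤ a m * b k` with `b k = η_1(G ^ {2k}) / |G| ^ k → 1`, which forces `a` to converge.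
-/


open Filter Topology

/-- `B` is a `g`-difference basis for the additive group `G`: every `x ∈ G` has at least `g`
representations `x = b₁ - b₂` with ordered pairs `(b₁, b₂) ∈ B × B`. -/
def IsDiffBasis {G : Type*} [AddCommGroup G] (g : ℕ) (B : Set G) : Prop :=
  ∀ x : G, g ≤ Nat.card {p : G × G // p.1 ∈ B ∧ p.2 ∈ B ∧ p.1 - p.2 = x}

/-- `η_g(G)`: the minimum size of a `g`-difference basis for `G`. -/
noncomputable def etaMin (G : Type*) [AddCommGroup G] (g : ℕ) : ℕ :=
  sInf {k : ℕ | ∃ B : Set G, B.Finite ∧ IsDiffBasis g B ∧ Nat.card B = k}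

/-- `G` is a weakly admissible finite abelian 2-group: it is isomorphic to
`∏_{i=1}^t Z_{2^{2s_i}}^{u_i} × ∏_{j=1}^w Z_{2^{2r_j+1}}^{v_j} × Z_2^v` with
`t, w, v ≥ 0`, `u_i, v_j ≥ 1`, `1 ≤ s_1 < ⋯ < s_t`, `1 ≤ r_1 < ⋯ < r_w`, and
`Σ_{i with s_i ∉ {1,2}} u_i + Σ_j v_j ≥ v`. -/
def IsWeaklyAdmissibleTwoGroup (G : Type*) [AddCommGroup G] : Prop :=
  ∃ (t w v : ℕ) (s u : Fin t → ℕ) (r vv : Fin w → ℕ),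
    StrictMono s ∧ (∀ i, 1 ≤ s i) ∧ (∀ i, 1 ≤ u i) ∧
    StrictMono r ∧ (∀ j, 1 ≤ r j) ∧ (∀ j, 1 ≤ vv j) ∧
    Nonempty (G ≃+ ((∀ i : Fin t, Fin (u i) → ZMod (2 ^ (2 * s i))) ×
      (∀ j : Fin w, Fin (vv j) → ZMod (2 ^ (2 * r j + 1))) ×
      (Fin v → ZMod 2))) ∧
    v ≤ (∑ i ∈ Finset.univ.filter (fun i : Fin t => s i ≠ 1 ∧ s i ≠ 2), u i) + ∑ j, vv j


/-- `B` covers `X` when every element of `X` is a difference of two elements of `B`. -/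
def Covers {A : Type*} [AddCommGroup A] (B : Finset A) (X : Set A) : Prop :=
  ∀ x ∈ X, ∃ b ∈ B, ∃ b' ∈ B, b - b' = x

/-- `E` is good when the powers `E ^ n` have difference bases of size
`(1 + o(1)) |E| ^ (n / 2)`; the `o(1)` is encoded by an arbitrary constant `c > 1`. -/
def Good (E : Type*) [AddCommGroup E] : Prop :=
  ∀ c : ℝ, 1 < c → ∀ᶠ n : ℕ in atTop, ∃ B : Finset (Fin n → E),
    (B.card : ℝ) ≤ c * Real.sqrt (Nat.card E) ^ n ∧ Covers B Set.univ

/-! ### Difference bases of extensions -/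

lemma covers_ext {K E Q : Type*} [AddCommGroup K] [AddCommGroup E] [AddCommGroup Q]
    (i : K →+ E) (f : E →+ Q) (hf : Function.Surjective f) (hex : ∀ x, f x = 0 → ∃ k, i k = x)
    {BK : Finset K} {BQ : Finset Q} (hK : Covers BK Set.univ) (hQ : Covers BQ Set.univ) :
    ∃ B : Finset E, B.card ≤ BK.card * BQ.card ∧ Covers B Set.univ := by
  classical
  refine ⟨Finset.image₂ (fun k q => i k + Function.surjInv hf q) BK BQ,
    Finset.card_image₂_le _ _ _, fun x _ => ?_⟩
  obtain ⟨q, hq, q', hq', hqq⟩ := hQ (f x) trivial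
  obtain ⟨k, hk⟩ := hex (x - (Function.surjInv hf q - Function.surjInv hf q')) (by
    simp [Function.surjInv_eq hf, hqq])
  obtain ⟨l, hl, l', hl', rfl⟩ := hK k trivial
  refine ⟨_, Finset.mem_image₂_of_mem hl hq, _, Finset.mem_image₂_of_mem hl' hq', ?_⟩
  rw [map_sub] at hk
  rw [add_sub_add_comm, hk]
  abel

/-- Goodness passes to extensions: lift a basis of the quotient and add a basis of the
subgroup. -/
lemma good_ext {K E Q : Type*} [AddCommGroup K] [AddCommGroup E] [AddCommGroup Q]
    (i : K →+ E) (f : E →+ Q) (hi : Function.Injective i) (hf : Function.Surjective f)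
    (hex : ∀ x, f x = 0 ↔ ∃ k, i k = x) (hK : Good K) (hQ : Good Q) : Good E := by
  intro c hc
  have hc' : 1 < Real.sqrt c := by
    rw [Real.lt_sqrt zero_le_one]; simpa using hc
  have hcard : Nat.card E = Nat.card K * Nat.card Q := by
    have h1 := f.ker.card_mul_index
    rw [AddSubgroup.index_ker, AddMonoidHom.range_eq_top.2 hf] at h1
    rw [← h1]
    congr 1
    · have : f.ker = i.range := by
        ext x; simp [AddMonoidHom.mem_ker, hex]
      rw [this]
      exact (Nat.card_congr (AddMonoidHom.ofInjective hi).toEquiv).symm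
    · simp
  filter_upwards [hK _ hc', hQ _ hc'] with n ⟨B₁, h₁, h₁'⟩ ⟨B₂, h₂, h₂'⟩
  obtain ⟨B, hB, hB'⟩ := covers_ext (i.compLeft (Fin n)) (f.compLeft (Fin n))
    (by
      intro q
      choose g hg using fun j => hf (q j)
      exact ⟨g, funext hg⟩)
    (by
      intro x hx
      choose k hk using fun j => (hex (x j)).1 (congrFun hx j)
      exact ⟨k, funext hk⟩) h₁' h₂'
  refine ⟨B, ?_, hB'⟩
  calc (B.card : ℝ) ≤ B₁.card * B₂.card := by exact_mod_cast hB
    _ ≤ (Real.sqrt c * Real.sqrt (Nat.card K) ^ n) * (Real.sqrt c * Real.sqrt (Nat.card Q) ^ n) := by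
        gcongr
    _ = c * Real.sqrt (Nat.card E) ^ n := by
        rw [hcard, Nat.cast_mul, Real.sqrt_mul (by positivity), mul_pow]
        have := Real.mul_self_sqrt (show 0 ≤ c by linarith)
        linear_combination (Real.sqrt (Nat.card K) ^ n * Real.sqrt (Nat.card Q) ^ n) * this

lemma good_of_subsingleton (E : Type*) [AddCommGroup E] [Subsingleton E] : Good E := by
  intro c hc
  refine Eventually.of_forall fun n => ⟨{0}, ?_, fun x _ => ⟨0, by simp, 0, by simp,
    Subsingleton.elim _ _⟩⟩
  simp [hc.le]

lemma good_equiv {E E' : Type*} [AddCommGroup E] [AddCommGroup E'] (e : E ≃+ E') (h : Good E) :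
    Good E' :=
  good_ext e.toAddMonoidHom (0 : E' →+ PUnit.{1}) e.injective (fun _ => ⟨0, Subsingleton.elim _ _⟩)
    (fun x => ⟨fun _ => ⟨e.symm x, by simp⟩, fun _ => rfl⟩) h (good_of_subsingleton _)

lemma good_prod {E E' : Type*} [AddCommGroup E] [AddCommGroup E'] (hE : Good E)
    (hEtwo : Good E') : Good (E × E') :=
  good_ext (AddMonoidHom.inl E E') (AddMonoidHom.snd E E') (fun x y h => by simpa using h)
    (fun y => ⟨(0, y), rfl⟩)
    (fun x => ⟨fun h => ⟨x.1, Prod.ext rfl h.symm⟩, by rintro ⟨k, rfl⟩; rfl⟩) hE hEtwo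

/-! ### A criterion for goodness -/

/-- A finite group of order `p ^ j` has a difference basis of size `O(p ^ (j / 2))`, namely the
union of a subgroup of order `p ^ (j / 2)` and a transversal of it. -/
lemma exists_covers_pGroup (p : ℕ) [Fact p.Prime] {A : Type*} [AddCommGroup A] [Finite A] (j : ℕ)
    (hj : Nat.card A = p ^ j) :
    ∃ B : Finset A, B.card ≤ 2 * p ^ ((j + 1) / 2) ∧ Covers B Set.univ := by
  classical
  have hp : 0 < p := (Fact.out : p.Prime).pos
  obtain ⟨S', hS'⟩ := Sylow.exists_subgroup_card_pow_prime (G := Multiplicative A) p (n := j / 2)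
    (by
      rw [show Nat.card (Multiplicative A) = Nat.card A from rfl, hj]
      exact pow_dvd_pow _ (Nat.div_le_self _ _))
  let S : AddSubgroup A := Subgroup.toAddSubgroup' S'
  have hS : Nat.card S = p ^ (j / 2) := hS'
  have hQ : Nat.card (A ⧸ S) = p ^ (j - j / 2) := by
    have h := S.card_eq_card_quotient_mul_card_addSubgroup
    rw [hS, hj] at h
    apply Nat.eq_of_mul_eq_mul_right (pow_pos hp (j / 2))
    rw [← h, ← pow_add]
    congr 1; omega
  have := Fintype.ofFinite S
  have := Fintype.ofFinite (A ⧸ S)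
  refine ⟨Finset.univ.image (fun s : S => (s : A)) ∪
    Finset.univ.image (fun q : A ⧸ S => q.out), ?_, fun x _ => ?_⟩
  · calc _ ≤ Nat.card S + Nat.card (A ⧸ S) := by
          refine (Finset.card_union_le _ _).trans (add_le_add ?_ ?_) <;>
          · refine Finset.card_image_le.trans (le_of_eq ?_)
            simp
      _ ≤ p ^ ((j + 1) / 2) + p ^ ((j + 1) / 2) := by
          rw [hS, hQ]
          gcongr <;> first | exact hp | omega
      _ = _ := by ring
  · have h1 : ((x : A ⧸ S).out : A ⧸ S) = (x : A ⧸ S) := Quotient.out_eq' _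
    rw [QuotientAddGroup.eq] at h1
    refine ⟨_, Finset.mem_union_right _ (Finset.mem_image_of_mem _ (Finset.mem_univ (x : A ⧸ S))),
      _, Finset.mem_union_left _ (Finset.mem_image_of_mem _
        (Finset.mem_univ (⟨_, S.neg_mem h1⟩ : S))), ?_⟩
    simp

/-- If `|E| = p ^ (2 k)` and `E ^ n` has a set of at most `p ^ (k n)` elements whose differences
fill the complement of a subgroup of index at least `p ^ n`, then `E` is good: the remaining
subgroup costs only `O(p ^ (k n - n / 2))` more elements. -/
lemma good_of_covers_compl (p k : ℕ) [Fact p.Prime] {E : Type*} [AddCommGroup E] [Finite E]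
    (hE : Nat.card E = p ^ (2 * k))
    (h : ∀ n : ℕ, n ≠ 0 → ∃ (X : Type) (_ : AddCommGroup X) (K : AddSubgroup X) (B : Finset X),
      Nonempty (X ≃+ (Fin n → E)) ∧ Nat.card K * p ^ n ≤ Nat.card X ∧ B.card ≤ p ^ (k * n) ∧
      Covers B (K : Set X)ᶜ) : Good E := by
  classical
  intro c hc
  have hp : p.Prime := Fact.out
  have hp1 : (1 : ℝ) < p := by exact_mod_cast hp.one_lt
  have hlim : Tendsto (fun n : ℕ => 2 * Real.sqrt p * (1 / Real.sqrt p) ^ n) atTop (𝓝 0) := by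
    have h1 : Tendsto (fun n : ℕ => (1 / Real.sqrt p) ^ n) atTop (𝓝 0) := by
      apply tendsto_pow_atTop_nhds_zero_of_lt_one (by positivity)
      rw [div_lt_one (by positivity), Real.lt_sqrt zero_le_one]
      simpa using hp1
    simpa using h1.const_mul (2 * Real.sqrt p)
  filter_upwards [hlim.eventually_lt_const (show (0:ℝ) < c - 1 by linarith),
    eventually_ne_atTop 0] with n hn hn0
  obtain ⟨X, _, K, B, ⟨e⟩, hK, hB, hcov⟩ := h n hn0
  have : Finite X := Finite.of_equiv _ e.symm.toEquiv
  have hX : Nat.card X = p ^ (2 * k * n) := by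
    rw [Nat.card_congr e.toEquiv, Nat.card_fun, hE]; simp [pow_mul]
  obtain ⟨j, hj, hKj⟩ := (Nat.dvd_prime_pow hp).1 (hX ▸ K.card_addSubgroup_dvd_card)
  obtain ⟨A, hA, hAcov⟩ := exists_covers_pGroup p j hKj
  have hjn : j + n ≤ 2 * k * n := by
    rw [hKj, hX, ← pow_add] at hK
    exact (Nat.pow_le_pow_iff_right hp.one_lt).1 hK
  refine ⟨(B ∪ A.image (fun a : K => (a : X))).image e, ?_, fun x _ => ?_⟩
  · have hA2 : (A.card : ℝ) ≤ 2 * Real.sqrt p * (1 / Real.sqrt p) ^ n * p ^ (k * n) := by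
      have hs : 0 < Real.sqrt p := by positivity
      have hsq : (p : ℝ) = Real.sqrt p ^ 2 := (Real.sq_sqrt (by positivity)).symm
      calc (A.card : ℝ) ≤ 2 * p ^ ((j + 1) / 2) := by exact_mod_cast hA
        _ = 2 * Real.sqrt p ^ (2 * ((j + 1) / 2)) := by rw [pow_mul, ← hsq]
        _ ≤ 2 * Real.sqrt p ^ (2 * (k * n) - n + 1) := by
            have : 1 ≤ Real.sqrt p := by rw [Real.one_le_sqrt]; exact hp1.le
            have : 2 * k * n = 2 * (k * n) := by ring
            gcongr
            · omega
        _ = 2 * Real.sqrt p * (1 / Real.sqrt p) ^ n * p ^ (k * n) := by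
            have h2 : (p : ℝ) ^ (k * n) = Real.sqrt p ^ (2 * (k * n) - n) * Real.sqrt p ^ n := by
              rw [← pow_add, Nat.sub_add_cancel (by
                have : 2 * k * n = 2 * (k * n) := by ring
                omega), pow_mul (Real.sqrt p) 2, ← hsq]
            rw [h2, pow_succ, one_div, inv_pow]
            field_simp
    have hsqrt : Real.sqrt (Nat.card E) = p ^ k := by
      rw [hE]; push_cast
      rw [mul_comm, pow_mul, Real.sqrt_sq (by positivity)]
    calc (((B ∪ A.image (fun a : K => (a : X))).image e).card : ℝ)
        ≤ B.card + A.card := by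
          exact_mod_cast Finset.card_image_le.trans ((Finset.card_union_le _ _).trans
            (add_le_add le_rfl Finset.card_image_le))
      _ ≤ p ^ (k * n) + 2 * Real.sqrt p * (1 / Real.sqrt p) ^ n * p ^ (k * n) :=
          add_le_add (by exact_mod_cast hB) hA2
      _ ≤ p ^ (k * n) + (c - 1) * p ^ (k * n) := by gcongr
      _ = c * Real.sqrt (Nat.card E) ^ n := by rw [hsqrt, ← pow_mul]; ring
  · by_cases hx : e.symm x ∈ K
    · obtain ⟨a, ha, a', ha', haa⟩ := hAcov ⟨_, hx⟩ trivial
      refine ⟨_, Finset.mem_image_of_mem _ (Finset.mem_union_right _ (Finset.mem_image_of_mem _ ha)),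
        _, Finset.mem_image_of_mem _ (Finset.mem_union_right _ (Finset.mem_image_of_mem _ ha')), ?_⟩
      rw [← map_sub, ← AddSubgroup.coe_sub, haa]; simp
    · obtain ⟨a, ha, a', ha', haa⟩ := hcov (e.symm x) hx
      refine ⟨_, Finset.mem_image_of_mem _ (Finset.mem_union_left _ ha),
        _, Finset.mem_image_of_mem _ (Finset.mem_union_left _ ha'), ?_⟩
      rw [← map_sub, haa]; simp

/-! ### The rings carrying the quadratic constructions -/

lemma exists_irreducible_natDegree (n : ℕ) (hn : n ≠ 0) :
    ∃ f : Polynomial (ZMod 2), f.Monic ∧ Irreducible f ∧ f.natDegree = n := by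
  have : Fact (Nat.Prime 2) := ⟨Nat.prime_two⟩
  obtain ⟨α, hα⟩ := Field.exists_primitive_element (ZMod 2) (GaloisField 2 n)
  have hα_int : IsIntegral (ZMod 2) α := Algebra.IsIntegral.isIntegral α
  refine ⟨minpoly (ZMod 2) α, minpoly.monic hα_int, minpoly.irreducible hα_int, ?_⟩
  rw [(Field.primitive_element_iff_minpoly_natDegree_eq _ _).1 hα, GaloisField.finrank 2 hn]

/-- For even `m`, the group `(ℤ / m) ^ n` carries the structure of a commutative ring `R` with
`R / 2R` the field of order `2 ^ n` (for `m` a power of two, `R` is a Galois ring). -/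
lemma exists_galoisRing (m : ℕ) (hm : 2 ∣ m) (hm1 : 1 < m) (n : ℕ) (hn : n ≠ 0) :
    ∃ (R F : Type) (_ : CommRing R) (_ : Field F) (_ : Finite F) (_ : CharP F 2) (π : R →+* F),
      Function.Surjective π ∧ Nat.card F = 2 ^ n ∧ (∀ r, π r = 0 → ∃ s, r = 2 * s) ∧
      Nonempty (R ≃+ (Fin n → ZMod m)) ∧ Nonempty (F ≃+ (Fin n → ZMod 2)) := by
  have : Fact (Nat.Prime 2) := ⟨Nat.prime_two⟩
  have : Fact (1 < m) := ⟨hm1⟩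
  obtain ⟨f₀, hmon, hirr, hdeg⟩ := exists_irreducible_natDegree n hn
  have hφ : Function.Surjective (ZMod.castHom hm (ZMod 2)) := ZMod.ringHom_surjective _
  obtain ⟨f, hf, hfdeg, hfmon⟩ := Polynomial.lifts_and_natDegree_eq_and_monic
    (f := ZMod.castHom hm (ZMod 2)) (p := f₀)
    ((Polynomial.lifts_iff_coeff_lifts _ ).2 fun k => by
      obtain ⟨a, ha⟩ := hφ (f₀.coeff k); exact ⟨a, ha⟩) hmon
  have : Fact (Irreducible f₀) := ⟨hirr⟩
  have e₀ : AdjoinRoot f₀ ≃+ (Fin n → ZMod 2) := by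
    have := (AdjoinRoot.powerBasis' hmon).basis.equivFun.toAddEquiv
    rwa [AdjoinRoot.powerBasis'_dim, hdeg] at this
  have e : AdjoinRoot f ≃+ (Fin n → ZMod m) := by
    have := (AdjoinRoot.powerBasis' hfmon).basis.equivFun.toAddEquiv
    rwa [AdjoinRoot.powerBasis'_dim, hfdeg, hdeg] at this
  have hfin : Finite (AdjoinRoot f₀) := Finite.of_equiv _ e₀.symm.toEquiv
  have hchar : CharP (AdjoinRoot f₀) 2 := charP_of_injective_algebraMap
    (algebraMap (ZMod 2) (AdjoinRoot f₀)).injective 2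
  let π : AdjoinRoot f →+* AdjoinRoot f₀ :=
    AdjoinRoot.lift ((AdjoinRoot.of f₀).comp (ZMod.castHom hm (ZMod 2))) (AdjoinRoot.root f₀) (by
      rw [← Polynomial.eval₂_map, hf, AdjoinRoot.eval₂_root])
  have hπ (p : Polynomial (ZMod m)) : π (AdjoinRoot.mk f p) =
      AdjoinRoot.mk f₀ (p.map (ZMod.castHom hm (ZMod 2))) := by
    rw [AdjoinRoot.lift_mk, ← Polynomial.eval₂_map]
    exact AdjoinRoot.aeval_eq _
  refine ⟨AdjoinRoot f, AdjoinRoot f₀, inferInstance, inferInstance, hfin, hchar, π, ?_, ?_, ?_,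
    ⟨e⟩, ⟨e₀⟩⟩
  · intro x
    obtain ⟨p, rfl⟩ := AdjoinRoot.mk_surjective x
    obtain ⟨p', rfl⟩ := Polynomial.map_surjective _ hφ p
    exact ⟨_, hπ p'⟩
  · rw [Nat.card_congr e₀.toEquiv, Nat.card_fun]; simp
  · intro r hr
    obtain ⟨p, rfl⟩ := AdjoinRoot.mk_surjective r
    rw [hπ, AdjoinRoot.mk_eq_zero] at hr
    obtain ⟨g, hg⟩ := hr
    obtain ⟨g', rfl⟩ := Polynomial.map_surjective _ hφ g
    rw [← hf, ← Polynomial.map_mul, ← sub_eq_zero, ← Polynomial.map_sub] at hg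
    have hdvd : Polynomial.C (2 : ZMod m) ∣ p - f * g' := by
      rw [Polynomial.C_dvd_iff_dvd_coeff]
      intro i
      have h0 : ZMod.castHom hm (ZMod 2) ((p - f * g').coeff i) = 0 := by
        rw [← Polynomial.coeff_map, hg, Polynomial.coeff_zero]
      obtain ⟨a, ha⟩ := ZMod.natCast_zmod_surjective ((p - f * g').coeff i)
      rw [← ha, map_natCast, ZMod.natCast_eq_zero_iff] at h0
      rw [← ha]
      exact_mod_cast Nat.cast_dvd_cast (α := ZMod m) h0
    obtain ⟨h, hh⟩ := hdvd
    refine ⟨AdjoinRoot.mk f h, ?_⟩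
    have := congrArg (AdjoinRoot.mk f) hh
    simpa [map_sub, map_mul, AdjoinRoot.mk_self, show AdjoinRoot.of f 2 = 2 from map_ofNat _ 2]
      using this

lemma card_ker_mul {A : Type*} {F : Type*} [AddCommGroup A] [AddCommGroup F]
    (f : A →+ F) (hf : Function.Surjective f) : Nat.card f.ker * Nat.card F = Nat.card A := by
  rw [← f.ker.card_mul_index, AddSubgroup.index_ker, AddMonoidHom.range_eq_top.2 hf]
  simp

/-- Over a ring `R` whose residue ring `F = R / 2R` is a finite field, every unit is modulo `4` a
difference of two squares of lifts of elements of `F`: such a square is determined modulo `4` by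
the element of `F`, so with `z = x - y` one needs `c = z ^ 2 + 2 y z` modulo `4`, which fixes `z`
modulo `2` and then `y` modulo `2`. -/
lemma exists_sq_sub_sq {R F : Type*} [CommRing R] [Field F] [Finite F] [CharP F 2] (π : R →+* F)
    (hker : ∀ r, π r = 0 → ∃ s, r = 2 * s) (s : F → R) (hs : ∀ y, π (s y) = y) (c : R)
    (hc : π c ≠ 0) : ∃ x y : F, x ≠ y ∧ ∃ d, c = s x ^ 2 - s y ^ 2 + 4 * d := by
  have h2 : (2 : F) = 0 := CharTwo.two_eq_zero
  obtain ⟨z, hz⟩ := (bijective_frobenius F 2).2 (π c)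
  rw [frobenius_def] at hz
  have hz0 : z ≠ 0 := by rintro rfl; apply hc; rw [← hz]; simp
  obtain ⟨a, ha⟩ := hker (c - s z ^ 2) (by simp [hs, hz])
  set y : F := π a / z with hy
  have hyz : y * z = π a := div_mul_cancel₀ _ hz0
  obtain ⟨b, hb⟩ := hker (s (y + z) - s y - s z) (by simp [hs])
  obtain ⟨e, he⟩ := hker (a - s y * s z) (by simp [hs, hyz])
  refine ⟨y + z, y, by simpa using hz0, e - b * (s y + s z + b), ?_⟩
  have h3 : s (y + z) = s y + s z + 2 * b := by linear_combination hb
  rw [h3]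
  linear_combination ha + 2 * he

/-! ### The basic good groups -/

/-- The squares of lifts form a set of size `2 ^ n` in `(ℤ / 4) ^ n` whose differences fill the
complement of `2 (ℤ / 4) ^ n`. -/
lemma good_zmod_four : Good (ZMod 4) := by
  classical
  have : Fact (Nat.Prime 2) := ⟨Nat.prime_two⟩
  refine good_of_covers_compl 2 1 (by simp) fun n hn => ?_
  obtain ⟨R, F, _, _, _, _, π, hπ, hF, hker, ⟨e⟩, -⟩ :=
    exists_galoisRing 4 (by norm_num) (by norm_num) n hn
  have := Fintype.ofFinite F
  let s : F → R := Function.surjInv hπ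
  have hs : ∀ y, π (s y) = y := Function.surjInv_eq hπ
  have h4 (d : R) : 4 * d = 0 := by
    apply e.injective
    rw [show (4 : R) * d = 4 • d by simp, map_nsmul, map_zero]
    ext i
    simp only [Pi.smul_apply, Pi.zero_apply, nsmul_eq_mul]
    rw [ZMod.natCast_self, zero_mul]
  refine ⟨R, inferInstance, π.toAddMonoidHom.ker, Finset.univ.image fun x : F => s x ^ 2, ⟨e⟩, ?_,
    ?_, ?_⟩
  · rw [← hF, card_ker_mul _ hπ]
  · refine Finset.card_image_le.trans (le_of_eq ?_)
    rw [Finset.card_univ, ← Nat.card_eq_fintype_card, hF, one_mul]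
  · intro c hc
    obtain ⟨x, y, -, d, h⟩ := exists_sq_sub_sq π hker s hs c hc
    refine ⟨_, Finset.mem_image_of_mem _ (Finset.mem_univ x), _,
      Finset.mem_image_of_mem _ (Finset.mem_univ y), ?_⟩
    rw [h, h4]; simp

/-- In `R × F` with `R = (ℤ / 8) ^ n` and `F = R / 2R`, the set of all
`(x ^ 2 + 4 x y, y)` has differences filling the complement of `2R × F`: modulo `4` a unit of `R`
determines a pair of distinct elements `x, x'` of `F`, after which `4 (x - x') y` can be
prescribed. -/
lemma good_zmod_eight_two : Good (ZMod 8 × ZMod 2) := by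
  classical
  have : Fact (Nat.Prime 2) := ⟨Nat.prime_two⟩
  refine good_of_covers_compl 2 2 (by simp) fun n hn => ?_
  obtain ⟨R, F, _, _, _, _, π, hπ, hF, hker, ⟨e⟩, ⟨e₀⟩⟩ :=
    exists_galoisRing 8 (by norm_num) (by norm_num) n hn
  have := Fintype.ofFinite F
  let s : F → R := Function.surjInv hπ
  have hs : ∀ y, π (s y) = y := Function.surjInv_eq hπ
  have h8 (d : R) : 8 * d = 0 := by
    apply e.injective
    rw [show (8 : R) * d = 8 • d by simp, map_nsmul, map_zero]
    ext i
    simp only [Pi.smul_apply, Pi.zero_apply, nsmul_eq_mul]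
    rw [ZMod.natCast_self, zero_mul]
  let E : R × F ≃+ (Fin n → ZMod 8 × ZMod 2) :=
    { toFun := fun x i => (e x.1 i, e₀ x.2 i)
      invFun := fun h => (e.symm fun i => (h i).1, e₀.symm fun i => (h i).2)
      left_inv := fun x => by ext <;> simp
      right_inv := fun h => by ext i <;> simp
      map_add' := fun x y => by ext i <;> simp }
  refine ⟨R × F, inferInstance, (π.toAddMonoidHom.comp (AddMonoidHom.fst R F)).ker,
    Finset.univ.image fun x : F × F => (s x.1 ^ 2 + 4 * (s x.1 * s x.2), x.2), ⟨E⟩, ?_, ?_, ?_⟩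
  · rw [← hF, card_ker_mul _ (hπ.comp Prod.fst_surjective)]
  · refine Finset.card_image_le.trans (le_of_eq ?_)
    rw [Finset.card_univ, ← Nat.card_eq_fintype_card, Nat.card_prod, hF]
    ring
  · rintro ⟨c, a⟩ hc
    obtain ⟨x, x', hxx, d, h⟩ := exists_sq_sub_sq π hker s hs c hc
    have hne : x - x' ≠ 0 := sub_ne_zero.2 hxx
    set y : F := (π d - x * a) / (x - x') with hy
    have hyz : y * (x - x') = π d - x * a := div_mul_cancel₀ _ hne
    obtain ⟨b, hb⟩ := hker (d - (s x * s (y + a) - s x' * s y)) (by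
      simp only [map_sub, map_mul, hs]; linear_combination -hyz)
    refine ⟨_, Finset.mem_image_of_mem _ (Finset.mem_univ (x, y + a)), _,
      Finset.mem_image_of_mem _ (Finset.mem_univ (x', y)), Prod.ext ?_ (by simp)⟩
    simp only [Prod.fst_sub]
    linear_combination -h - 4 * hb - h8 b

/-- The parabola in `F × F`, where `F` is a finite field of odd characteristic: its differences
fill the complement of `{0} × F`. -/
lemma good_zmod_odd_prime (p : ℕ) [Fact p.Prime] (hp2 : p ≠ 2) : Good (ZMod p × ZMod p) := by
  classical
  refine good_of_covers_compl p 1 (by simp [pow_two]) fun n hn => ?_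
  obtain ⟨F, _, _, h2, hF, ⟨e₀⟩⟩ : ∃ (F : Type) (_ : Field F) (_ : Finite F), (2 : F) ≠ 0 ∧
      Nat.card F = p ^ n ∧ Nonempty (F ≃+ (Fin n → ZMod p)) := by
    refine ⟨GaloisField p n, inferInstance, inferInstance, Ring.two_ne_zero ?_,
      GaloisField.card p n hn, ⟨(LinearEquiv.ofFinrankEq (R := ZMod p) _ _ ?_).toAddEquiv⟩⟩
    · rw [ringChar.eq (GaloisField p n) p]; exact hp2
    · rw [Module.finrank_fin_fun, GaloisField.finrank p hn]
  have := Fintype.ofFinite F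
  let E : F × F ≃+ (Fin n → ZMod p × ZMod p) :=
    { toFun := fun x i => (e₀ x.1 i, e₀ x.2 i)
      invFun := fun h => (e₀.symm fun i => (h i).1, e₀.symm fun i => (h i).2)
      left_inv := fun x => by ext <;> simp
      right_inv := fun h => by ext i <;> simp
      map_add' := fun x y => by ext i <;> simp }
  refine ⟨F × F, inferInstance, (AddMonoidHom.fst F F).ker,
    Finset.univ.image fun x : F => (x, x ^ 2), ⟨E⟩, ?_, ?_, ?_⟩
  · rw [← hF, card_ker_mul _ Prod.fst_surjective]
  · refine Finset.card_image_le.trans (le_of_eq ?_)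
    rw [Finset.card_univ, ← Nat.card_eq_fintype_card, hF, one_mul]
  · rintro ⟨a, c⟩ hc
    have ha : a ≠ 0 := hc
    refine ⟨_, Finset.mem_image_of_mem _ (Finset.mem_univ ((c / a + a) / 2)), _,
      Finset.mem_image_of_mem _ (Finset.mem_univ ((c / a - a) / 2)), Prod.ext ?_ ?_⟩
    · simp only [Prod.fst_sub]; field_simp; ring
    · simp only [Prod.snd_sub]; field_simp; ring

/-! ### Goodness of squares of groups -/

lemma good_sq_ext {K E Q : Type*} [AddCommGroup K] [AddCommGroup E] [AddCommGroup Q]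
    (i : K →+ E) (f : E →+ Q) (hi : Function.Injective i) (hf : Function.Surjective f)
    (hex : ∀ x, f x = 0 ↔ ∃ k, i k = x) (hK : Good (K × K)) (hQ : Good (Q × Q)) :
    Good (E × E) :=
  good_ext (i.prodMap i) (f.prodMap f) (hi.prodMap hi) (hf.prodMap hf)
    (fun x => by
      rw [AddMonoidHom.coe_prodMap, Prod.map, Prod.mk_eq_zero, hex, hex]
      constructor
      · rintro ⟨⟨a, ha⟩, b, hb⟩; exact ⟨(a, b), Prod.ext ha hb⟩
      · rintro ⟨k, rfl⟩; exact ⟨⟨k.1, rfl⟩, k.2, rfl⟩) hK hQ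

lemma good_sq_equiv {E E' : Type*} [AddCommGroup E] [AddCommGroup E'] (e : E ≃+ E')
    (h : Good (E × E)) : Good (E' × E') :=
  good_equiv (e.prodCongr e) h

lemma good_sq_prod {E E' : Type*} [AddCommGroup E] [AddCommGroup E'] (h : Good (E × E))
    (h' : Good (E' × E')) : Good ((E × E') × (E × E')) :=
  good_equiv (AddEquiv.prodProdProdComm _ _ _ _) (good_prod h h')

lemma good_sq_odd (m : ℕ) : ∀ (H : Type*) [AddCommGroup H] [Finite H], Nat.card H = m → Odd m →
    Good (H × H) := by
  induction m using Nat.strong_induction_on with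
  | _ m ih =>
    intro H _ _ hm hodd
    by_cases h1 : m = 1
    · have : Subsingleton H := (Nat.card_eq_one_iff_unique.1 (hm.trans h1)).1
      exact good_of_subsingleton _
    · obtain ⟨p, hp, hpm⟩ := Nat.exists_prime_and_dvd h1
      have : Fact p.Prime := ⟨hp⟩
      have hp2 : p ≠ 2 := by
        rintro rfl; exact (Nat.not_even_iff_odd.2 hodd) (even_iff_two_dvd.2 hpm)
      obtain ⟨x, hx⟩ := exists_prime_addOrderOf_dvd_card' (G := H) p (hm ▸ hpm)
      let S := AddSubgroup.zmultiples x
      have hS : Nat.card S = p := by rw [Nat.card_zmultiples, hx]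
      have e : ZMod p ≃+ S := hS ▸ zmodAddCyclicAddEquiv (G := S) inferInstance
      have hc := S.card_eq_card_quotient_mul_card_addSubgroup
      have hpos : 0 < Nat.card (H ⧸ S) := Nat.card_pos
      refine good_sq_ext S.subtype (QuotientAddGroup.mk' S) S.subtype_injective
        (QuotientAddGroup.mk'_surjective S) (fun y => ?_)
        (good_sq_equiv e (good_zmod_odd_prime p hp2)) (ih _ ?_ (H ⧸ S) rfl ?_)
      · rw [← AddMonoidHom.mem_ker, QuotientAddGroup.ker_mk']; simp
      · rw [hS, hm] at hc
        rw [hc]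
        exact lt_mul_of_one_lt_right hpos hp.one_lt
      · rw [hm] at hc
        rw [hc] at hodd
        exact (Nat.odd_mul.1 hodd).1

/-- Multiplication by `b` and reduction modulo `b` present `ℤ / ab` as an extension of `ℤ / b` by
`ℤ / a`. -/
lemma exists_zmod_ext (a b : ℕ) [NeZero a] [NeZero b] :
    ∃ (i : ZMod a →+ ZMod (a * b)) (f : ZMod (a * b) →+ ZMod b), Function.Injective i ∧
      Function.Surjective f ∧ ∀ x, f x = 0 ↔ ∃ k, i k = x := by
  have hb : b ≠ 0 := NeZero.ne b
  have hval (k : ℤ) : ((zmultiplesHom (ZMod (a * b))) (b : ZMod (a * b))) k = ((k * b : ℤ)) := by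
    simp
  let i : ZMod a →+ ZMod (a * b) := ZMod.lift a ⟨zmultiplesHom (ZMod (a * b)) (b : ZMod (a * b)), by
    rw [hval, ZMod.intCast_zmod_eq_zero_iff_dvd]; push_cast; rfl⟩
  have hi (k : ℤ) : i (k : ZMod a) = ((k * b : ℤ) : ZMod (a * b)) := by
    rw [← hval]; exact ZMod.lift_coe _ _ _
  have hf (k : ℤ) : ZMod.castHom (Dvd.intro_left a rfl : b ∣ a * b) (ZMod b) (k : ZMod (a * b)) =
      (k : ZMod b) := map_intCast _ k
  refine ⟨i, (ZMod.castHom (Dvd.intro_left a rfl : b ∣ a * b) (ZMod b)).toAddMonoidHom, ?_,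
    ZMod.ringHom_surjective _, fun x => ⟨fun h => ?_, ?_⟩⟩
  · rw [injective_iff_map_eq_zero]
    intro x hx
    obtain ⟨k, rfl⟩ := ZMod.intCast_surjective x
    rw [hi, ZMod.intCast_zmod_eq_zero_iff_dvd] at hx
    push_cast at hx
    rw [ZMod.intCast_zmod_eq_zero_iff_dvd]
    exact (mul_dvd_mul_iff_right (by exact_mod_cast hb)).1 hx
  · obtain ⟨k, rfl⟩ := ZMod.intCast_surjective x
    have h' : ((k : ℤ) : ZMod b) = 0 := (hf k).symm.trans h
    rw [ZMod.intCast_zmod_eq_zero_iff_dvd] at h'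
    obtain ⟨l, rfl⟩ := h'
    exact ⟨l, by rw [hi, mul_comm l]⟩
  · rintro ⟨k, rfl⟩
    obtain ⟨k, rfl⟩ := ZMod.intCast_surjective k
    rw [hi]
    refine (hf _).trans ?_
    simp

lemma good_sq_zmod_mul (a b : ℕ) [NeZero a] [NeZero b] (ha : Good (ZMod a × ZMod a))
    (hb : Good (ZMod b × ZMod b)) : Good (ZMod (a * b) × ZMod (a * b)) := by
  obtain ⟨i, f, hi, hf, hex⟩ := exists_zmod_ext a b
  exact good_sq_ext i f hi hf hex ha hb

/-- A further factor `A` of `ℤ / ab` is absorbed by the quotient `ℤ / b × A`. -/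
lemma good_sq_zmod_mul_prod {A : Type*} [AddCommGroup A] (a b : ℕ) [NeZero a] [NeZero b]
    (ha : Good (ZMod a × ZMod a)) (hb : Good ((ZMod b × A) × (ZMod b × A))) :
    Good ((ZMod (a * b) × A) × (ZMod (a * b) × A)) := by
  obtain ⟨i, f, hi, hf, hex⟩ := exists_zmod_ext a b
  refine good_sq_ext ((AddMonoidHom.inl _ A).comp i) (f.prodMap (AddMonoidHom.id A))
    (fun x y h => hi (Prod.ext_iff.1 h).1) (hf.prodMap Function.surjective_id) (fun x => ?_) ha hb
  constructor
  · intro h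
    obtain ⟨k, hk⟩ := (hex x.1).1 (Prod.ext_iff.1 h).1
    exact ⟨k, Prod.ext hk (Prod.ext_iff.1 h).2.symm⟩
  · rintro ⟨k, rfl⟩
    exact Prod.ext ((hex _).2 ⟨k, rfl⟩) rfl

/-- `(ℤ / 8) ^ 2` is an extension of the good group `ℤ / 8 × ℤ / 2` by `ℤ / 4`. -/
lemma good_sq_zmod_eight : Good (ZMod 8 × ZMod 8) := by
  obtain ⟨i, f, hi, hf, hex⟩ := exists_zmod_ext 4 2
  refine good_ext ((AddMonoidHom.inr (ZMod 8) (ZMod 8)).comp i) ((AddMonoidHom.id (ZMod 8)).prodMap f)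
    (fun x y h => hi (Prod.ext_iff.1 h).2) (Function.surjective_id.prodMap hf) (fun x => ?_)
    good_zmod_four good_zmod_eight_two
  constructor
  · intro h
    obtain ⟨k, hk⟩ := (hex x.2).1 (Prod.ext_iff.1 h).2
    exact ⟨k, Prod.ext (Prod.ext_iff.1 h).1.symm hk⟩
  · rintro ⟨k, rfl⟩
    exact Prod.ext rfl ((hex _).2 ⟨k, rfl⟩)

lemma good_sq_two_pow (e : ℕ) (he : e ≠ 1) : Good (ZMod (2 ^ e) × ZMod (2 ^ e)) := by
  induction e using Nat.strong_induction_on with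
  | _ e ih =>
    match e, he with
    | 0, _ =>
      have : Subsingleton (ZMod (2 ^ 0)) := inferInstanceAs (Subsingleton (ZMod 1))
      exact good_of_subsingleton _
    | 3, _ => exact good_sq_zmod_eight
    | e + 2, h =>
      by_cases h1 : e = 1
      · subst h1; exact good_sq_zmod_eight
      · rw [pow_add, mul_comm]
        exact good_sq_zmod_mul (2 ^ 2) (2 ^ e) (good_prod good_zmod_four good_zmod_four)
          (ih e (by omega) h1)

lemma good_sq_two_pow_two (e : ℕ) (he : 3 ≤ e) (he' : e ≠ 4) :
    Good ((ZMod (2 ^ e) × ZMod 2) × (ZMod (2 ^ e) × ZMod 2)) := by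
  have h3 : Good ((ZMod (2 ^ 3) × ZMod 2) × (ZMod (2 ^ 3) × ZMod 2)) :=
    good_prod good_zmod_eight_two good_zmod_eight_two
  obtain ⟨k, rfl⟩ := Nat.exists_eq_add_of_le' he
  rw [pow_add]
  exact good_sq_zmod_mul_prod (2 ^ k) (2 ^ 3) (good_sq_two_pow k (by omega)) h3

lemma good_sq_pi {ι : Type*} [Finite ι] (A : ι → Type*) [∀ i, AddCommGroup (A i)]
    (h : ∀ i, Good (A i × A i)) : Good ((∀ i, A i) × (∀ i, A i)) := by
  classical
  have := Fintype.ofFinite ι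
  suffices H : ∀ s : Finset ι, Good ((∀ i : s, A i) × (∀ i : s, A i)) by
    refine good_sq_equiv ?_ (H Finset.univ)
    exact
      { toFun := fun f i => f ⟨i, Finset.mem_univ i⟩
        invFun := fun f i => f i
        left_inv := fun _ => rfl
        right_inv := fun _ => rfl
        map_add' := fun _ _ => rfl }
  intro s
  induction s using Finset.induction_on with
  | empty => exact good_of_subsingleton _
  | insert a s ha ih =>
    refine good_sq_ext (K := A a) (Q := ∀ i : s, A i)
      (AddMonoidHom.single (fun i : (insert a s : Finset ι) => A i) ⟨a, Finset.mem_insert_self a s⟩)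
      { toFun := fun f i => f ⟨i, Finset.mem_insert_of_mem i.2⟩
        map_zero' := rfl
        map_add' := fun _ _ => rfl } ?_ ?_ ?_ (h a) ih
    · intro x y hxy
      simpa using congrFun hxy ⟨a, Finset.mem_insert_self a s⟩
    · intro g
      refine ⟨fun i => if hi : i.1 ∈ s then g ⟨i, hi⟩ else 0, ?_⟩
      ext i
      simp
    · intro x
      constructor
      · intro hx
        refine ⟨x ⟨a, Finset.mem_insert_self a s⟩, ?_⟩
        ext ⟨i, hi⟩
        rcases Finset.mem_insert.1 hi with rfl | his
        · simp
        · have hne : (⟨i, hi⟩ : (insert a s : Finset ι)) ≠ ⟨a, Finset.mem_insert_self a s⟩ := by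
            intro h
            obtain rfl : i = a := Subtype.ext_iff.1 h
            exact ha his
          rw [AddMonoidHom.single_apply, Pi.single_eq_of_ne hne]
          exact (congrFun hx ⟨i, his⟩).symm
      · rintro ⟨k, rfl⟩
        ext ⟨i, hi⟩
        have hne : (⟨i, Finset.mem_insert_of_mem hi⟩ : (insert a s : Finset ι)) ≠
            ⟨a, Finset.mem_insert_self a s⟩ := by
          intro h
          obtain rfl : i = a := Subtype.ext_iff.1 h
          exact ha hi
        exact Pi.single_eq_of_ne (M := fun i : (insert a s : Finset ι) => A i) hne k

/-- Each factor `ℤ / 2` is paired, through the embedding `e`, with its own cyclic factor of order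
`2 ^ 3` or `2 ^ k`, `k ≥ 5`. -/
lemma good_sq_of_embedding {ι V : Type*} [Finite ι] (ex : ι → ℕ) (hex : ∀ i, ex i ≠ 1) (e : V ↪ ι)
    (he : ∀ v, 3 ≤ ex (e v) ∧ ex (e v) ≠ 4) :
    Good (((∀ i, ZMod (2 ^ ex i)) × (V → ZMod 2)) × ((∀ i, ZMod (2 ^ ex i)) × (V → ZMod 2))) := by
  let E : (∀ i, ZMod (2 ^ ex i) × ({v // e v = i} → ZMod 2)) ≃+
      ((∀ i, ZMod (2 ^ ex i)) × (V → ZMod 2)) :=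
    { toFun := fun h => (fun i => (h i).1, fun v => (h (e v)).2 ⟨v, rfl⟩)
      invFun := fun x i => (x.1 i, fun v => x.2 v.1)
      left_inv := fun h => by
        ext i
        · rfl
        · rename_i v
          obtain ⟨v, rfl⟩ := v
          rfl
      right_inv := fun x => rfl
      map_add' := fun x y => rfl }
  refine good_sq_equiv E (good_sq_pi _ fun i => ?_)
  by_cases hi : ∃ v, e v = i
  · obtain ⟨v, rfl⟩ := hi
    have : Unique {w // e w = e v} := ⟨⟨⟨v, rfl⟩⟩, fun w => Subtype.ext (e.injective w.2)⟩
    exact good_sq_equiv ((AddEquiv.refl _).prodCongr 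
      (AddEquiv.piUnique fun _ : {w // e w = e v} => ZMod 2).symm)
      (good_sq_two_pow_two (ex (e v)) (he v).1 (he v).2)
  · have : IsEmpty {w // e w = i} := ⟨fun w => hi ⟨w.1, w.2⟩⟩
    exact good_sq_prod (good_sq_two_pow _ (hex i)) (good_of_subsingleton _)

lemma good_sq_of_weaklyAdmissible {G : Type*} [AddCommGroup G]
    (hG : IsWeaklyAdmissibleTwoGroup G) : Good (G × G) := by
  classical
  obtain ⟨t, w, v, s, u, r, vv, -, hs, -, -, hr, -, ⟨e⟩, hv⟩ := hG
  let ι := (Σ i : Fin t, Fin (u i)) ⊕ (Σ j : Fin w, Fin (vv j))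
  let ex : ι → ℕ := Sum.elim (fun x => 2 * s x.1) (fun x => 2 * r x.1 + 1)
  let κ := (Σ i : {i : Fin t // s i ≠ 1 ∧ s i ≠ 2}, Fin (u i)) ⊕ (Σ j : Fin w, Fin (vv j))
  have hκ : Fintype.card κ = (∑ i ∈ Finset.univ.filter (fun i : Fin t => s i ≠ 1 ∧ s i ≠ 2), u i) +
      ∑ j, vv j := by
    simp only [κ, Fintype.card_sum, Fintype.card_sigma, Fintype.card_fin]
    congr 1
    exact (Finset.sum_subtype _ (by simp) _).symm
  obtain ⟨φ⟩ : Nonempty (Fin v ↪ κ) :=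
    Function.Embedding.nonempty_of_card_le (by simpa [hκ] using hv)
  let ψ : κ → ι := Sum.map (fun x => ⟨x.1.1, x.2⟩) id
  have hψ : Function.Injective ψ := by
    refine Function.Injective.sumMap ?_ Function.injective_id
    rintro ⟨⟨i, hi⟩, a⟩ ⟨⟨j, hj⟩, b⟩ h
    obtain ⟨h1, h2⟩ := Sigma.mk.inj_iff.1 h
    dsimp only at h1
    subst h1
    simpa using h2
  have hψex : ∀ k, 3 ≤ ex (ψ k) ∧ ex (ψ k) ≠ 4 := by
    rintro (⟨⟨i, hi⟩, a⟩ | ⟨j, a⟩)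
    · have := hs i
      simp only [ψ, ex, Sum.map_inl, Sum.elim_inl]
      omega
    · have := hr j
      simp only [ψ, ex, Sum.map_inr, Sum.elim_inr, id]
      omega
  have hex : ∀ i, ex i ≠ 1 := by
    rintro (⟨i, a⟩ | ⟨j, a⟩)
    · simp only [ex, Sum.elim_inl]; omega
    · have := hr j
      simp only [ex, Sum.elim_inr]; omega
  let E : ((∀ x, ZMod (2 ^ ex x)) × (Fin v → ZMod 2)) ≃+
      ((∀ i : Fin t, Fin (u i) → ZMod (2 ^ (2 * s i))) ×
      (∀ j : Fin w, Fin (vv j) → ZMod (2 ^ (2 * r j + 1))) × (Fin v → ZMod 2)) :=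
    { toFun := fun h => (fun i a => h.1 (Sum.inl ⟨i, a⟩), fun j a => h.1 (Sum.inr ⟨j, a⟩), h.2)
      invFun := fun h => (fun x => match x with
        | Sum.inl x => h.1 x.1 x.2
        | Sum.inr x => h.2.1 x.1 x.2, h.2.2)
      left_inv := fun h => Prod.ext (by funext x; rcases x with x | x <;> rfl) rfl
      right_inv := fun h => rfl
      map_add' := fun x y => rfl }
  exact good_sq_equiv (E.trans e.symm)
    (good_sq_of_embedding ex hex (φ.trans ⟨ψ, hψ⟩) fun x => hψex _)

/-! ### The function `etaMin` -/

section Eta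

variable {A C X : Type*} [AddCommGroup A] [AddCommGroup C] [AddCommGroup X]

lemma etaMin_le [Finite A] {g : ℕ} {B : Set A} (h : IsDiffBasis g B) :
    etaMin A g ≤ Nat.card B :=
  Nat.sInf_le ⟨B, Set.toFinite B, h, rfl⟩

lemma etaMin_one_le [Finite A] {B : Finset A} (h : Covers B Set.univ) : etaMin A 1 ≤ B.card := by
  have hB : IsDiffBasis 1 (B : Set A) := by
    intro x
    obtain ⟨b, hb, b', hb', rfl⟩ := h x trivial
    have : Nonempty {p : A × A // p.1 ∈ (B : Set A) ∧ p.2 ∈ (B : Set A) ∧ p.1 - p.2 = b - b'} :=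
      ⟨⟨(b, b'), hb, hb', rfl⟩⟩
    exact Nat.card_pos
  exact (etaMin_le hB).trans (by simp)

lemma exists_isDiffBasis [Finite A] {g : ℕ} (h : ∃ B : Set A, IsDiffBasis g B) :
    ∃ B : Set A, IsDiffBasis g B ∧ Nat.card B = etaMin A g := by
  obtain ⟨B₀, hB₀⟩ := h
  obtain ⟨B, -, hB, hc⟩ := Nat.sInf_mem (s := {k : ℕ | ∃ B : Set A, B.Finite ∧ IsDiffBasis g B ∧
    Nat.card B = k}) ⟨_, B₀, Set.toFinite _, hB₀, rfl⟩
  exact ⟨B, hB, hc⟩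

lemma isDiffBasis_univ [Finite A] {g : ℕ} (h : g ≤ Nat.card A) :
    IsDiffBasis g (Set.univ : Set A) := by
  intro x
  refine h.trans (Nat.card_le_card_of_injective
    (fun y : A => ⟨(x + y, y), trivial, trivial, by simp⟩) fun y z hyz => ?_)
  exact (Prod.ext_iff.1 (Subtype.ext_iff.1 hyz)).2

/-- The pairs of elements of a difference basis number at least `|A|`. -/
lemma card_le_etaMin_sq [Finite A] : Nat.card A ≤ etaMin A 1 ^ 2 := by
  obtain ⟨B, hB, hc⟩ := exists_isDiffBasis (A := A) (g := 1)
    ⟨_, isDiffBasis_univ (Nat.card_pos)⟩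
  rw [← hc, pow_two, ← Nat.card_prod]
  refine Nat.card_le_card_of_surjective (fun p : B × B => (p.1 : A) - p.2) fun x => ?_
  have h1 : 0 < Nat.card {p : A × A // p.1 ∈ B ∧ p.2 ∈ B ∧ p.1 - p.2 = x} := hB x
  obtain ⟨⟨p, h, h', hx⟩⟩ := (Nat.card_pos_iff.1 h1).1
  exact ⟨(⟨_, h⟩, ⟨_, h'⟩), hx⟩

/-- Products of difference bases give `η_g(A × C) ≤ η_g(A) η_1(C)`. -/
lemma etaMin_le_mul [Finite A] [Finite C] (e : X ≃+ A × C) {g : ℕ}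
    (h : ∃ B : Set A, IsDiffBasis g B) : etaMin X g ≤ etaMin A g * etaMin C 1 := by
  have : Finite X := Finite.of_equiv _ e.symm.toEquiv
  obtain ⟨B₁, h₁, hc₁⟩ := exists_isDiffBasis h
  obtain ⟨B₂, h₂, hc₂⟩ := exists_isDiffBasis (A := C) (g := 1)
    ⟨_, isDiffBasis_univ (Nat.card_pos)⟩
  have hB : IsDiffBasis g (e.symm '' (B₁ ×ˢ B₂)) := by
    intro x
    have hpos : 0 < Nat.card {p : C × C // p.1 ∈ B₂ ∧ p.2 ∈ B₂ ∧ p.1 - p.2 = (e x).2} :=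
      h₂ (e x).2
    obtain ⟨⟨q, hq, hq', hqx⟩⟩ := (Nat.card_pos_iff.1 hpos).1
    refine (h₁ (e x).1).trans (Nat.card_le_card_of_injective
      (fun p => ⟨(e.symm (p.1.1, q.1), e.symm (p.1.2, q.2)),
        ⟨_, ⟨p.2.1, hq⟩, rfl⟩, ⟨_, ⟨p.2.2.1, hq'⟩, rfl⟩, ?_⟩) ?_)
    · rw [← map_sub, AddEquiv.symm_apply_eq]
      exact Prod.ext p.2.2.2 hqx
    · intro p p' hpp
      have h := Prod.ext_iff.1 (Subtype.ext_iff.1 hpp)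
      refine Subtype.ext (Prod.ext ?_ ?_)
      · exact (Prod.ext_iff.1 (e.symm.injective h.1)).1
      · exact (Prod.ext_iff.1 (e.symm.injective h.2)).1
  refine (etaMin_le hB).trans (le_of_eq ?_)
  rw [Nat.card_image_of_injective e.symm.injective, ← hc₁, ← hc₂, ← Nat.card_prod]
  exact Nat.card_congr (Equiv.Set.prod _ _)

end Eta

lemma nonempty_addEquiv_arrow_prod {G : Type*} [AddCommGroup G] {N a b : ℕ} (h : N = a + b) :
    Nonempty ((Fin N → G) ≃+ (Fin a → G) × (Fin b → G)) := by
  let σ : Fin N ≃ Fin a ⊕ Fin b := Fintype.equivOfCardEq (by simp [h])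
  exact ⟨
    { toFun := fun f => (fun i => f (σ.symm (Sum.inl i)), fun i => f (σ.symm (Sum.inr i)))
      invFun := fun f i => Sum.elim f.1 f.2 (σ i)
      left_inv := fun f => by
        funext i
        obtain ⟨j, rfl⟩ := σ.symm.surjective i
        rcases j with j | j <;> simp
      right_inv := fun f => by simp
      map_add' := fun f g => rfl }⟩

/-- `η_1(G ^ {2n}) ~ |G| ^ n` when `G × G` is good. -/
lemma tendsto_etaMin_one {G : Type*} [AddCommGroup G] [Finite G] (hG : Good (G × G)) :
    Tendsto (fun n : ℕ => (etaMin (Fin (2 * n) → G) 1 : ℝ) / (Nat.card G : ℝ) ^ n) atTop (𝓝 1) := by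
  classical
  have hpos : (0 : ℝ) < Nat.card G := by exact_mod_cast Nat.card_pos
  rw [tendsto_order]
  constructor
  · intro a ha
    refine Eventually.of_forall fun n => ha.trans_le ?_
    rw [one_le_div (by positivity)]
    have h := card_le_etaMin_sq (A := Fin (2 * n) → G)
    rw [Nat.card_fun, Nat.card_fin, pow_mul'] at h
    exact_mod_cast (Nat.pow_le_pow_iff_left two_ne_zero).1 h
  · intro c hc
    obtain ⟨c', hc1, hc2⟩ := exists_between hc
    filter_upwards [hG c' hc1] with n ⟨B, hB, hcov⟩
    refine lt_of_le_of_lt ?_ hc2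
    rw [div_le_iff₀ (by positivity)]
    obtain ⟨e⟩ := nonempty_addEquiv_arrow_prod (G := G) (two_mul n)
    let E : (Fin n → G × G) ≃+ (Fin (2 * n) → G) := AddEquiv.trans
      { toFun := fun f => (fun i => (f i).1, fun i => (f i).2)
        invFun := fun f i => (f.1 i, f.2 i)
        left_inv := fun f => rfl
        right_inv := fun f => rfl
        map_add' := fun f g => rfl } e.symm
    have hcov' : Covers (B.image E) Set.univ := by
      intro x _
      obtain ⟨b, hb, b', hb', h⟩ := hcov (E.symm x) trivial
      exact ⟨_, Finset.mem_image_of_mem _ hb, _, Finset.mem_image_of_mem _ hb', by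
        rw [← map_sub, h]; simp⟩
    calc (etaMin (Fin (2 * n) → G) 1 : ℝ) ≤ B.card := by
          exact_mod_cast (etaMin_one_le hcov').trans Finset.card_image_le
      _ ≤ c' * Real.sqrt (Nat.card (G × G)) ^ n := hB
      _ = c' * (Nat.card G : ℝ) ^ n := by
          rw [Nat.card_prod, Nat.cast_mul, Real.sqrt_mul_self hpos.le]

/-- A nonnegative sequence with `a (m + k) ≤ a m * b k` and `b k → 1` converges (to its
infimum). -/
lemma exists_tendsto_of_submul (a b : ℕ → ℝ) (N : ℕ) (ha : ∀ n, 0 ≤ a n)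
    (hab : ∀ m, N ≤ m → ∀ k, a (m + k) ≤ a m * b k) (hb : Tendsto b atTop (𝓝 1)) :
    ∃ L, Tendsto a atTop (𝓝 L) := by
  let S : Set ℝ := a '' Set.Ici N
  have hbdd : BddBelow S := ⟨0, by rintro _ ⟨n, -, rfl⟩; exact ha n⟩
  refine ⟨sInf S, tendsto_order.2 ⟨fun l hl => ?_, fun l hl => ?_⟩⟩
  · filter_upwards [eventually_ge_atTop N] with n hn
    exact hl.trans_le (csInf_le hbdd ⟨n, hn, rfl⟩)
  · obtain ⟨_, ⟨m, hm, rfl⟩, hlt⟩ := exists_lt_of_csInf_lt (s := S) ⟨a N, N, le_refl N, rfl⟩ hl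
    have h1 : Tendsto (fun k => a m * b k) atTop (𝓝 (a m)) := by simpa using hb.const_mul (a m)
    obtain ⟨K, hK⟩ := eventually_atTop.1 (h1.eventually_lt_const hlt)
    filter_upwards [eventually_ge_atTop (m + K)] with n hn
    obtain ⟨k, rfl⟩ := Nat.exists_eq_add_of_le hn
    rw [add_assoc]
    exact (hab m hm _).trans_lt (hK _ (by omega))

/-- The normalised sequence `η_g(G ^ {2n + r})` converges for every fixed `r`. -/
lemma exists_tendsto_etaMin {G : Type*} [AddCommGroup G] [Finite G] (g r : ℕ)
    (h1 : Tendsto (fun n : ℕ => (etaMin (Fin (2 * n) → G) 1 : ℝ) / (Nat.card G : ℝ) ^ n) atTop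
      (𝓝 1)) :
    ∃ L, Tendsto (fun n : ℕ => (etaMin (Fin (2 * n + r) → G) g : ℝ) / (Nat.card G : ℝ) ^ n) atTop
      (𝓝 L) := by
  have hpos : (0 : ℝ) < Nat.card G := by exact_mod_cast Nat.card_pos
  -- For `n ≥ g` either `G ^ (2 n + r)` is a `g`-difference basis of itself, or `|G| = 1` and no
  -- `g`-difference basis exists at all, so that `etaMin` vanishes identically.
  by_cases hex : ∀ m, g ≤ m → ∃ B : Set (Fin (2 * m + r) → G), IsDiffBasis g B
  · refine exists_tendsto_of_submul _ _ g (fun n => by positivity) (fun m hm k => ?_) h1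
    obtain ⟨e⟩ := nonempty_addEquiv_arrow_prod (G := G)
      (show 2 * (m + k) + r = (2 * m + r) + 2 * k by ring)
    have := etaMin_le_mul e (hex m hm)
    rw [pow_add, div_mul_div_comm]
    gcongr
    exact_mod_cast this
  · push Not at hex
    obtain ⟨m, hm, hno⟩ := hex
    have hlt : Nat.card (Fin (2 * m + r) → G) < g := by
      by_contra! hge
      exact hno _ (isDiffBasis_univ hge)
    have hG1 : Nat.card G = 1 := by
      by_contra hne
      have h2 : 1 < Nat.card G := by
        have : 0 < Nat.card G := Nat.card_pos
        omega
      rw [Nat.card_fun, Nat.card_fin] at hlt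
      have := Nat.lt_pow_self h2 (n := 2 * m + r)
      omega
    have hg : 1 < g := by rwa [Nat.card_fun, hG1, one_pow] at hlt
    have hsub : Subsingleton G := (Nat.card_eq_one_iff_unique.1 hG1).1
    refine ⟨0, tendsto_const_nhds.congr fun n => ?_⟩
    have h0 : etaMin (Fin (2 * n + r) → G) g = 0 := by
      refine Nat.sInf_eq_zero.2 (Or.inr (Set.eq_empty_of_forall_notMem ?_))
      rintro k ⟨B, -, hB, -⟩
      have := (hB 0).trans (Finite.card_le_one_iff_subsingleton.2 inferInstance)
      omega
    rw [h0]; simp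

/-- For `G = G₂ × H` with `G₂` a weakly admissible finite abelian 2-group and `H` of odd order,
`η₁(G^{2n}) = (1 + o(1))|G|^n`, and for each `g ≥ 1` the limits
`lim_n η_g(G^{2n})/(√g |G|^n)` and `lim_n η_g(G^{2n+1})/(√g |G|^{n+1/2})` exist. -/
theorem stmt6 (G₂ H : Type*) [AddCommGroup G₂] [Fintype G₂] [AddCommGroup H] [Fintype H]
    (hG₂ : IsWeaklyAdmissibleTwoGroup G₂) (hH : Odd (Fintype.card H)) :
    Filter.Tendsto (fun n : ℕ => (etaMin (Fin (2 * n) → G₂ × H) 1 : ℝ) /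
        (Fintype.card (G₂ × H) : ℝ) ^ n) Filter.atTop (nhds 1) ∧
    ∀ g : ℕ, 1 ≤ g →
      (∃ L : ℝ, Filter.Tendsto (fun n : ℕ => (etaMin (Fin (2 * n) → G₂ × H) g : ℝ) /
          (Real.sqrt g * (Fintype.card (G₂ × H) : ℝ) ^ n)) Filter.atTop (nhds L)) ∧
      (∃ L : ℝ, Filter.Tendsto (fun n : ℕ => (etaMin (Fin (2 * n + 1) → G₂ × H) g : ℝ) /
          (Real.sqrt g * (Fintype.card (G₂ × H) : ℝ) ^ ((n : ℝ) + 1 / 2)))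
        Filter.atTop (nhds L)) := by
  have hgood : Good ((G₂ × H) × (G₂ × H)) :=
    good_sq_prod (good_sq_of_weaklyAdmissible hG₂)
      (good_sq_odd _ H rfl (by rwa [Nat.card_eq_fintype_card]))
  have h1 := tendsto_etaMin_one hgood
  have hpos : (0 : ℝ) < Fintype.card (G₂ × H) := by exact_mod_cast Fintype.card_pos
  refine ⟨by simpa only [Nat.card_eq_fintype_card] using h1, fun g _ => ⟨?_, ?_⟩⟩
  · obtain ⟨L, hL⟩ := exists_tendsto_etaMin g 0 h1
    refine ⟨L / Real.sqrt g, (hL.div_const _).congr fun n => ?_⟩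
    rw [Nat.card_eq_fintype_card, add_zero, div_div, mul_comm (Real.sqrt g)]
  · obtain ⟨L, hL⟩ := exists_tendsto_etaMin g 1 h1
    refine ⟨L / (Real.sqrt g * (Fintype.card (G₂ × H) : ℝ) ^ (1 / 2 : ℝ)),
      (hL.div_const _).congr fun n => ?_⟩
    rw [Nat.card_eq_fintype_card, Real.rpow_add hpos, Real.rpow_natCast, div_div]
    congr 1
    ring
end
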